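/- Let σ ∈ K_n with n > 5. Suppose there is exactly one king permutation π with π ≺ σ and π ∈ ℍ, and that every king permutation π′ with π′ ≺ σ and π ⋠ π′ (π not contained in π′) avoids [3142] or avoids [2413]. Then μ(σ) = 0. -/

import Mathlib

open Equiv

/-- The Manhattan distance between two elements of `Fin n`. -/
def fdist {n : ℕ} (a b : Fin n) : ℕ := ((a : ℤ) - (b : ℤ)).natAbs

/-- A king permutation: no two adjacent positions carry adjacent values. -/
def IsKing {n : ℕ} (σ : Equiv.Perm (Fin n)) : Prop :=
  ∀ i j : Fin n, (j : ℕ) = (i : ℕ) + 1 → fdist (σ i) (σ j) ≠ 1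

/-- Pattern containment `π ⪯ σ`. -/
def Contains {m n : ℕ} (π : Equiv.Perm (Fin m)) (σ : Equiv.Perm (Fin n)) : Prop :=
  ∃ f : Fin m ↪o Fin n, ∀ a b : Fin m, π a < π b ↔ σ (f a) < σ (f b)

/-- Strict pattern containment `π ≺ σ`. -/
def StrictContains {m n : ℕ} (π : Equiv.Perm (Fin m)) (σ : Equiv.Perm (Fin n)) : Prop :=
  Contains π σ ∧ m < n

/-- `nabla σ i` deletes the `i`-th entry of `σ` and standardizes. -/
def nabla {n : ℕ} (σ : Equiv.Perm (Fin (n + 1))) (i : Fin (n + 1)) : Equiv.Perm (Fin n) :=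
  Equiv.removeNone ((finSuccEquiv' i).symm.trans (σ.trans (finSuccEquiv' (σ i))))

/-- `nablaStar σ a` deletes the value `a` from `σ` and standardizes. -/
def nablaStar {n : ℕ} (σ : Equiv.Perm (Fin (n + 1))) (a : Fin (n + 1)) : Equiv.Perm (Fin n) :=
  nabla σ (σ⁻¹ a)

/-- The permutation [2413] (0-based one-line notation [1,3,0,2]). -/
def p2413 : Equiv.Perm (Fin 4) :=
  ⟨![1, 3, 0, 2], ![2, 0, 3, 1], by intro x; fin_cases x <;> rfl, by intro x; fin_cases x <;> rfl⟩

/-- The permutation [3142] (0-based one-line notation [2,0,3,1]). -/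
def p3142 : Equiv.Perm (Fin 4) :=
  ⟨![2, 0, 3, 1], ![1, 3, 0, 2], by intro x; fin_cases x <;> rfl, by intro x; fin_cases x <;> rfl⟩

/-- `σ i` vertically separates `σ j` from `σ k`. -/
def VSep {n : ℕ} (σ : Equiv.Perm (Fin n)) (i j k : Fin n) : Prop :=
  i ≠ j ∧ i ≠ k ∧ j ≠ k ∧ fdist i j = 1 ∧ fdist i k = 1 ∧ fdist (σ j) (σ k) = 1

/-- `σ i` horizontally separates `σ j` from `σ k`. -/
def HSep {n : ℕ} (σ : Equiv.Perm (Fin n)) (i j k : Fin n) : Prop :=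
  i ≠ j ∧ i ≠ k ∧ j ≠ k ∧ fdist (σ i) (σ j) = 1 ∧ fdist (σ i) (σ k) = 1 ∧ fdist j k = 1

/-- `σ i` separates `σ j` from `σ k`. -/
def Separates {n : ℕ} (σ : Equiv.Perm (Fin n)) (i j k : Fin n) : Prop :=
  VSep σ i j k ∨ HSep σ i j k

/-- `π` has a 2-block at positions `j`, `j+1` (0-based). -/
def HasTwoBlockAt {n : ℕ} (π : Equiv.Perm (Fin n)) (j : ℕ) : Prop :=
  ∃ hj : j + 1 < n, fdist (π ⟨j, by omega⟩) (π ⟨j + 1, hj⟩) = 1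

/-- `π` has a 3-block at positions `p`, `p+1`, `p+2` (0-based). -/
def HasThreeBlockAt {n : ℕ} (π : Equiv.Perm (Fin n)) (p : ℕ) : Prop :=
  ∃ hp : p + 2 < n, ∃ m : ℕ,
    ({(π ⟨p, by omega⟩ : ℕ), (π ⟨p + 1, by omega⟩ : ℕ), (π ⟨p + 2, by omega⟩ : ℕ)} : Finset ℕ)
      = {m, m + 1, m + 2}

open scoped Classical in
/-- The Möbius function of the poset of king permutations:
`μ([1]) = 1` and, for longer kings, `μ(σ) = -∑ μ(τ)` over all king permutations `τ ≺ σ`. -/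
noncomputable def kingMu : (n : ℕ) → Equiv.Perm (Fin n) → ℤ
  | 0, _ => 1
  | 1, _ => 1
  | n + 2, σ =>
    - ∑ l ∈ (Finset.Ico 1 (n + 2)).attach,
        ∑ τ ∈ Finset.univ.filter
            (fun τ : Equiv.Perm (Fin l.1) => IsKing τ ∧ StrictContains τ σ),
          kingMu l.1 τ
termination_by n _ => n
decreasing_by
  have := l.2
  simp only [Finset.mem_Ico] at this
  omega

/-- The permutation [24153] (0-based one-line notation [1,3,0,4,2]). -/
def p24153 : Equiv.Perm (Fin 5) :=
  ⟨![1, 3, 0, 4, 2], ![2, 0, 4, 1, 3], by intro x; fin_cases x <;> rfl, by intro x; fin_cases x <;> rfl⟩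

/-- The permutation [35142] (0-based one-line notation [2,4,0,3,1]). -/
def p35142 : Equiv.Perm (Fin 5) :=
  ⟨![2, 4, 0, 3, 1], ![2, 4, 0, 3, 1], by intro x; fin_cases x <;> rfl, by intro x; fin_cases x <;> rfl⟩

/-- The permutation [42513] (0-based one-line notation [3,1,4,0,2]). -/
def p42513 : Equiv.Perm (Fin 5) :=
  ⟨![3, 1, 4, 0, 2], ![3, 1, 4, 0, 2], by intro x; fin_cases x <;> rfl, by intro x; fin_cases x <;> rfl⟩

/-- The permutation [31524] (0-based one-line notation [2,0,4,1,3]). -/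
def p31524 : Equiv.Perm (Fin 5) :=
  ⟨![2, 0, 4, 1, 3], ![1, 3, 0, 4, 2], by intro x; fin_cases x <;> rfl, by intro x; fin_cases x <;> rfl⟩

/-- The set ℍ = {[24153],[35142],[42513],[31524]}. -/
def Hset : Set (Equiv.Perm (Fin 5)) := {p24153, p35142, p42513, p31524}


def AvQ {n : ℕ} (q : Fin n → ℤ) : Prop :=
  ∀ a b c d : Fin n, a < b → b < c → c < d →
    ¬ (q c < q a ∧ q a < q d ∧ q d < q b) ∧ ¬ (q b < q d ∧ q d < q a ∧ q a < q c)

def SplitQ {n : ℕ} (q : Fin n → ℤ) (S : Finset (Fin n)) : Prop :=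
  ∃ A B : Finset (Fin n), A.Nonempty ∧ B.Nonempty ∧ A ∪ B = S ∧ (∀ a ∈ A, ∀ b ∈ B, a < b) ∧
    ((∀ a ∈ A, ∀ b ∈ B, q a < q b) ∨ (∀ a ∈ A, ∀ b ∈ B, q b < q a))

theorem AvQ.neg {n : ℕ} {q : Fin n → ℤ} (h : AvQ q) : AvQ (fun i => - q i) := by
  intro a b c d h1 h2 h3
  have := h a b c d h1 h2 h3
  grind

theorem SplitQ.neg {n : ℕ} {q : Fin n → ℤ} {S} (h : SplitQ (fun i => - q i) S) : SplitQ q S := by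
  obtain ⟨A, B, hA, hB, hU, hp, hq⟩ := h
  refine ⟨A, B, hA, hB, hU, hp, ?_⟩
  rcases hq with hq | hq
  · right; intro a ha b hb; have := hq a ha b hb; linarith
  · left; intro a ha b hb; have := hq a ha b hb; linarith

theorem split_step {n : ℕ} (q : Fin n → ℤ) (hi : Function.Injective q) (hav : AvQ q)
    (A B : Finset (Fin n)) (m : Fin n) (hA : A.Nonempty) (hB : B.Nonempty)
    (hAm : ∀ a ∈ A, a < m) (hBm : ∀ b ∈ B, b < m) (hp : ∀ a ∈ A, ∀ b ∈ B, a < b)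
    (hq : ∀ a ∈ A, ∀ b ∈ B, q a < q b)
    (ih : SplitQ q (insert m A)) : SplitQ q (insert m (A ∪ B)) := by
  by_cases h1 : ∀ a ∈ A, q a < q m
  · refine ⟨A, insert m B, hA, by simp, by ext; simp, ?_, Or.inl ?_⟩
    · intro a ha b hb
      rcases Finset.mem_insert.1 hb with rfl | hb
      · exact hAm a ha
      · exact hp a ha b hb
    · intro a ha b hb
      rcases Finset.mem_insert.1 hb with rfl | hb
      · exact h1 a ha
      · exact hq a ha b hb
  by_cases h2 : ∀ a ∈ A, q m < q a
  · refine ⟨A ∪ B, {m}, by simp [hA], by simp, by ext; simp, ?_, Or.inr ?_⟩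
    · intro a ha b hb
      rw [Finset.mem_singleton.1 hb]
      rcases Finset.mem_union.1 ha with ha | ha
      · exact hAm a ha
      · exact hBm a ha
    · intro a ha b hb
      rw [Finset.mem_singleton.1 hb]
      rcases Finset.mem_union.1 ha with ha | ha
      · exact h2 a ha
      · obtain ⟨x, hx⟩ := hA
        exact (h2 x hx).trans (hq x hx a ha)
  push Not at h1 h2
  obtain ⟨u, hu, hu'⟩ := h1
  obtain ⟨v, hv, hv'⟩ := h2
  have hne : ∀ a ∈ A, q a ≠ q m := fun a ha h => (hAm a ha).ne (hi h)
  obtain ⟨C, D, hC, hD, hU, hp2, hq2⟩ := ih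
  have hmem : ∀ x, (x ∈ C ∨ x ∈ D) ↔ (x = m ∨ x ∈ A) := by
    intro x
    rw [← Finset.mem_union, hU, Finset.mem_insert]
  have hmC : m ∉ C := by
    intro hm
    obtain ⟨d, hd⟩ := hD
    have h3 := hp2 m hm d hd
    rcases (hmem d).1 (Or.inr hd) with rfl | h
    · exact lt_irrefl _ h3
    · exact lt_asymm h3 (hAm d h)
  have hmD : m ∈ D := by
    have := (hmem m).2 (Or.inl rfl); tauto
  have hCA : ∀ c ∈ C, c ∈ A := by
    intro c hc
    rcases (hmem c).1 (Or.inl hc) with rfl | h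
    · exact absurd hc hmC
    · exact h
  rcases hq2 with hq2 | hq2
  · refine ⟨C, D ∪ B, hC, by simp [hD], ?_, ?_, Or.inl ?_⟩
    · ext x
      have := hmem x
      simp only [Finset.mem_union, Finset.mem_insert]; tauto
    · intro a ha b hb
      rcases Finset.mem_union.1 hb with hb | hb
      · exact hp2 a ha b hb
      · exact hp a (hCA a ha) b hb
    · intro a ha b hb
      rcases Finset.mem_union.1 hb with hb | hb
      · exact hq2 a ha b hb
      · exact hq a (hCA a ha) b hb
  · exfalso
    obtain ⟨c, hc⟩ := hC
    obtain ⟨b, hb⟩ := hB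
    have hvD : v ∈ D := by
      rcases (hmem v).2 (Or.inr hv) with h | h
      · have := hq2 v h m hmD; linarith
      · exact h
    have h5 := hq2 c hc m hmD
    have h6 := hq c (hCA c hc) b hb
    have h7 : q v < q m := lt_of_le_of_ne hv' (hne v hv)
    exact (hav c v b m (hp2 c hc v hvD) (hp v hv b hb) (hBm b hb)).2 ⟨h7, h5, h6⟩

theorem split_exists {n : ℕ} (q : Fin n → ℤ) (hi : Function.Injective q) (hav : AvQ q) :
    ∀ (k : ℕ) (S : Finset (Fin n)), S.card = k → 2 ≤ k → SplitQ q S := by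
  intro k
  induction k using Nat.strong_induction_on with
  | _ k ih =>
  intro S hS hk
  have hne : S.Nonempty := by rw [← Finset.card_pos]; omega
  set m := S.max' hne with hm
  have hmS : m ∈ S := S.max'_mem hne
  have hcard : (S.erase m).card = k - 1 := by rw [Finset.card_erase_of_mem hmS, hS]
  have hlt : ∀ a ∈ S.erase m, a < m := fun a ha => by
    have h1 := S.le_max' a (Finset.mem_of_mem_erase ha)
    exact lt_of_le_of_ne h1 (Finset.ne_of_mem_erase ha)
  by_cases h2 : k = 2
  · subst h2
    obtain ⟨x, hx⟩ := Finset.card_eq_one.1 hcard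
    have hxm : x < m := hlt x (by simp [hx])
    refine ⟨{x}, {m}, by simp, by simp, ?_, by simpa using hxm, ?_⟩
    · rw [← hx]; ext y; simp only [Finset.mem_union, Finset.mem_erase, Finset.mem_singleton]
      constructor
      · rintro (h | rfl); exacts [h.2, hmS]
      · intro h; by_cases hy : y = m <;> simp [hy, h]
    · have : q x ≠ q m := fun h => hxm.ne (hi h)
      rcases lt_or_gt_of_ne this with h | h
      · left; simpa using h
      · right; simpa using h
  · obtain ⟨A, B, hA, hB, hU, hp, hq⟩ := ih (k-1) (by omega) _ hcard (by omega)
    have hSeq : S = insert m (A ∪ B) := by rw [hU, Finset.insert_erase hmS]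
    have hAm : ∀ a ∈ A, a < m := fun a ha => hlt a (by rw [← hU]; simp [ha])
    have hBm : ∀ a ∈ B, a < m := fun a ha => hlt a (by rw [← hU]; simp [ha])
    have hdisj : Disjoint A B := by
      rw [Finset.disjoint_left]; intro x hx hx'; exact lt_irrefl _ (hp x hx x hx')
    have hc : A.card + B.card = k - 1 := by
      rw [← Finset.card_union_of_disjoint hdisj, hU, hcard]
    have hA1 := hA.card_pos
    have hB1 := hB.card_pos
    have hmA : m ∉ A := fun h => lt_irrefl _ (hAm m h)
    have hi2 : SplitQ q (insert m A) := by
      apply ih (A.card + 1) (by omega) _ (Finset.card_insert_of_notMem hmA) (by omega)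
    rw [hSeq]
    rcases hq with hq | hq
    · exact split_step q hi hav A B m hA hB hAm hBm hp hq hi2
    · apply SplitQ.neg
      apply split_step _ (fun a b h => hi (neg_injective h)) hav.neg A B m hA hB hAm hBm hp
      · intro a ha b hb; have := hq a ha b hb; linarith
      · apply SplitQ.neg; simpa using hi2

theorem twins_exist {n : ℕ} (q : Fin n → ℤ) (hi : Function.Injective q) (hav : AvQ q) :
    ∀ (k : ℕ) (S : Finset (Fin n)), S.card = k → 2 ≤ k →
      ∃ x ∈ S, ∃ y ∈ S, x < y ∧ ∀ z ∈ S, ¬ (x < z ∧ z < y) ∧ ¬ (q x < q z ∧ q z < q y) ∧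
        ¬ (q y < q z ∧ q z < q x) := by
  intro k
  induction k using Nat.strong_induction_on with
  | _ k ih =>
  intro S hS hk
  obtain ⟨A, B, hA, hB, hU, hp, hq⟩ := split_exists q hi hav k S hS hk
  have hdisj : Disjoint A B := by
    rw [Finset.disjoint_left]; intro x hx hx'; exact lt_irrefl _ (hp x hx x hx')
  have hc : A.card + B.card = k := by
    rw [← Finset.card_union_of_disjoint hdisj, hU, hS]
  have hA1 := hA.card_pos
  have hB1 := hB.card_pos
  subst hU
  by_cases hA2 : 2 ≤ A.card
  · obtain ⟨x, hx, y, hy, hxy, hz⟩ := ih A.card (by omega) A rfl hA2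
    refine ⟨x, Finset.mem_union_left _ hx, y, Finset.mem_union_left _ hy, hxy, ?_⟩
    intro z hz'
    rcases Finset.mem_union.1 hz' with h | h
    · exact hz z h
    · have := hp y hy z h
      refine ⟨fun h' => lt_asymm this h'.2, ?_⟩
      rcases hq with hq | hq
      · have h1 := hq x hx z h; have h2 := hq y hy z h; constructor <;> rintro ⟨_, _⟩ <;> linarith
      · have h1 := hq x hx z h; have h2 := hq y hy z h; constructor <;> rintro ⟨_, _⟩ <;> linarith
  by_cases hB2 : 2 ≤ B.card
  · obtain ⟨x, hx, y, hy, hxy, hz⟩ := ih B.card (by omega) B rfl hB2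
    refine ⟨x, Finset.mem_union_right _ hx, y, Finset.mem_union_right _ hy, hxy, ?_⟩
    intro z hz'
    rcases Finset.mem_union.1 hz' with h | h
    · have := hp z h x hx
      refine ⟨fun h' => lt_asymm this h'.1, ?_⟩
      rcases hq with hq | hq
      · have h1 := hq z h x hx; have h2 := hq z h y hy; constructor <;> rintro ⟨_, _⟩ <;> linarith
      · have h1 := hq z h x hx; have h2 := hq z h y hy; constructor <;> rintro ⟨_, _⟩ <;> linarith
    · exact hz z h
  · obtain ⟨a, rfl⟩ := Finset.card_eq_one.1 (show A.card = 1 by omega)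
    obtain ⟨b, rfl⟩ := Finset.card_eq_one.1 (show B.card = 1 by omega)
    refine ⟨a, by simp, b, by simp, hp a (by simp) b (by simp), ?_⟩
    intro z hz
    simp only [Finset.mem_union, Finset.mem_singleton] at hz
    rcases hz with rfl | rfl <;> simp

theorem contains_of_four {n : ℕ} (p : Equiv.Perm (Fin 4)) (σ : Equiv.Perm (Fin n))
    (f : Fin 4 → Fin n) (h1 : f 0 < f 1) (h2 : f 1 < f 2) (h3 : f 2 < f 3)
    (h : ∀ a b, p a < p b → σ (f a) < σ (f b)) : Contains p σ := by
  have hs : StrictMono f := by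
    rw [Fin.strictMono_iff_lt_succ]
    intro i; fin_cases i <;> assumption
  refine ⟨OrderEmbedding.ofStrictMono f hs, fun a b => ⟨h a b, fun hlt => ?_⟩⟩
  rcases lt_trichotomy (p a) (p b) with h' | h' | h'
  · exact h'
  · have := p.injective h'
    subst this
    exact absurd hlt (lt_irrefl _)
  · exact absurd hlt (lt_asymm (h b a h'))

theorem king_contains {n : ℕ} (hn : 2 ≤ n) (σ : Equiv.Perm (Fin n)) (hσ : IsKing σ) :
    Contains p3142 σ ∨ Contains p2413 σ := by
  by_contra hcon
  push Not at hcon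
  obtain ⟨hc1, hc2⟩ := hcon
  have hi : Function.Injective (fun i : Fin n => ((σ i : ℕ) : ℤ)) := by
    intro a b h
    apply σ.injective; apply Fin.ext; simpa using h
  have hav : AvQ (fun i : Fin n => ((σ i : ℕ) : ℤ)) := by
    intro a b c d h1 h2 h3
    constructor
    · rintro ⟨k1, k2, k3⟩
      apply hc2
      simp only [Nat.cast_lt, Fin.val_fin_lt] at k1 k2 k3
      have e1 := k1.trans k2
      have e2 := k2.trans k3
      have e3 := e1.trans k3
      apply contains_of_four _ _ ![a, b, c, d] h1 h2 h3
      intro x y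
      fin_cases x <;> fin_cases y <;> simp [p2413, *]
    · rintro ⟨k1, k2, k3⟩
      apply hc1
      simp only [Nat.cast_lt, Fin.val_fin_lt] at k1 k2 k3
      have e1 := k1.trans k2
      have e2 := k2.trans k3
      have e3 := e1.trans k3
      apply contains_of_four _ _ ![a, b, c, d] h1 h2 h3
      intro x y
      fin_cases x <;> fin_cases y <;> simp [p3142, *]
  obtain ⟨x, -, y, -, hxy, hz⟩ := twins_exist _ hi hav n Finset.univ (by simp) hn
  have hy : (y : ℕ) = x + 1 := by
    by_contra hne
    have hxy' : (x : ℕ) < y := hxy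
    have hyn := y.2
    refine (hz ⟨x + 1, by omega⟩ (by simp)).1 ⟨?_, ?_⟩ <;> rw [Fin.lt_def] <;> simp <;> omega
  apply hσ x y hy
  have hne : (σ x : ℕ) ≠ σ y := fun h => hxy.ne (σ.injective (Fin.ext h))
  have hxn := (σ x).2
  have hyn := (σ y).2
  unfold fdist
  rcases lt_or_gt_of_ne hne with h | h
  · by_contra hne
    have := (hz (σ.symm ⟨σ x + 1, by omega⟩) (by simp)).2.1
    simp at this
    omega
  · by_contra hne
    have := (hz (σ.symm ⟨σ y + 1, by omega⟩) (by simp)).2.2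
    simp at this
    omega

theorem Contains.trans' {l m n : ℕ} {ρ : Equiv.Perm (Fin l)} {τ : Equiv.Perm (Fin m)}
    {σ : Equiv.Perm (Fin n)} (h1 : Contains ρ τ) (h2 : Contains τ σ) : Contains ρ σ := by
  obtain ⟨f, hf⟩ := h1
  obtain ⟨g, hg⟩ := h2
  exact ⟨f.trans g, fun a b => (hf a b).trans (hg _ _)⟩

theorem Contains.le' {m n : ℕ} {τ : Equiv.Perm (Fin m)}
    {σ : Equiv.Perm (Fin n)} (h1 : Contains τ σ) : m ≤ n := by
  obtain ⟨f, hf⟩ := h1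
  simpa using Fintype.card_le_of_injective f f.injective

theorem Contains.eq' {n : ℕ} {τ σ : Equiv.Perm (Fin n)} (h1 : Contains τ σ) : τ = σ := by
  obtain ⟨f, hf⟩ := h1
  have hid : ∀ g : Fin n → Fin n, StrictMono g → ∀ i, g i = i := by
    intro g hg
    have : g = id := by
      apply StrictMono.range_inj hg strictMono_id |>.1
      rw [(Finite.injective_iff_surjective.1 hg.injective).range_eq]; simp
    intro i; simp [this]
  have hf' : ∀ i, f i = i := hid f f.strictMono
  simp only [hf'] at hf
  have hs : StrictMono (fun i => σ (τ.symm i)) := by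
    intro a b hab
    apply (hf _ _).1
    simpa using hab
  ext i
  have := hid _ hs (τ i)
  simp at this
  rw [this]

open scoped Classical in
noncomputable def below {n : ℕ} (σ : Equiv.Perm (Fin n)) : Finset (Σ l : ℕ, Equiv.Perm (Fin l)) :=
  (Finset.Ico 1 n).sigma (fun l => Finset.univ.filter
            (fun τ : Equiv.Perm (Fin l) => IsKing τ ∧ StrictContains τ σ))

open scoped Classical in
theorem mem_below {n l : ℕ} (σ : Equiv.Perm (Fin n)) (τ : Equiv.Perm (Fin l)) :
    (⟨l, τ⟩ : Σ l : ℕ, Equiv.Perm (Fin l)) ∈ below σ ↔ 1 ≤ l ∧ l < n ∧ IsKing τ ∧ Contains τ σ := by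
  rw [below, Finset.mem_sigma, Finset.mem_filter, Finset.mem_Ico]
  simp only [StrictContains, Finset.mem_univ, true_and]; tauto

open scoped Classical in
theorem kingMu_eq {n : ℕ} (hn : 2 ≤ n) (σ : Equiv.Perm (Fin n)) :
    kingMu n σ = - ∑ x ∈ below σ, kingMu x.1 x.2 := by
  obtain ⟨n, rfl⟩ : ∃ k, n = k + 2 := ⟨n - 2, by omega⟩
  rw [kingMu, below, Finset.sum_sigma]
  congr 1
  exact Finset.sum_attach (Finset.Ico 1 (n+2)) (fun l => ∑ τ ∈ Finset.univ.filter
            (fun τ : Equiv.Perm (Fin l) => IsKing τ ∧ StrictContains τ σ), kingMu l τ)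

/-- If every strictly smaller king with nonzero value lies in `T`, sum over `T`. -/
theorem kingMu_eq_of {n : ℕ} (hn : 2 ≤ n) (σ : Equiv.Perm (Fin n))
    (T : Finset (Σ l : ℕ, Equiv.Perm (Fin l))) (hT : ∀ x ∈ T, x ∈ below σ)
    (h : ∀ (l : ℕ) (τ : Equiv.Perm (Fin l)), 1 ≤ l → l < n → IsKing τ → Contains τ σ →
      (⟨l, τ⟩ : Σ l : ℕ, Equiv.Perm (Fin l)) ∉ T → kingMu l τ = 0) :
    kingMu n σ = - ∑ x ∈ T, kingMu x.1 x.2 := by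
  rw [kingMu_eq hn, ← Finset.sum_subset (fun x hx => hT x hx)]
  rintro ⟨l, τ⟩ hx hx'
  obtain ⟨h1, h2, h3, h4⟩ := (mem_below σ τ).1 hx
  exact h l τ h1 h2 h3 h4 hx'

theorem king_one (τ : Equiv.Perm (Fin 1)) : IsKing τ := by
  intro i j h; omega

theorem one_contained {n : ℕ} (hn : 1 ≤ n) (τ : Equiv.Perm (Fin 1)) (σ : Equiv.Perm (Fin n)) :
    Contains τ σ := by
  refine ⟨OrderEmbedding.ofStrictMono (fun _ => ⟨0, hn⟩) ?_, ?_⟩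
  · intro a b h; omega
  · intro a b
    have : a = b := Subsingleton.elim _ _
    subst this; simp

theorem king_2413 : IsKing p2413 := by
  unfold IsKing fdist p2413; decide
theorem king_3142 : IsKing p3142 := by
  unfold IsKing fdist p3142; decide

theorem ne_2413 : p2413 ≠ p3142 := by
  intro h
  have := congrArg (fun p : Equiv.Perm (Fin 4) => p 0) h
  simp [p2413, p3142] at this

/-- Kings of length between 2 and 4. -/
theorem small_kings {l : ℕ} (τ : Equiv.Perm (Fin l)) (hτ : IsKing τ) (h2 : 2 ≤ l) (h4 : l ≤ 4) :
    (⟨l, τ⟩ : Σ l : ℕ, Equiv.Perm (Fin l)) = ⟨4, p3142⟩ ∨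
    (⟨l, τ⟩ : Σ l : ℕ, Equiv.Perm (Fin l)) = ⟨4, p2413⟩ := by
  rcases king_contains h2 τ hτ with h | h
  · obtain rfl : l = 4 := le_antisymm h4 h.le'
    left; rw [h.eq']
  · obtain rfl : l = 4 := le_antisymm h4 h.le'
    right; rw [h.eq']

theorem mu_one (τ : Equiv.Perm (Fin 1)) : kingMu 1 τ = 1 := by
  rw [kingMu]

theorem len_one {l : ℕ} (τ : Equiv.Perm (Fin l)) (h : l = 1) :
    (⟨l, τ⟩ : Σ l : ℕ, Equiv.Perm (Fin l)) = ⟨1, 1⟩ := by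
  subst h
  rw [Subsingleton.elim τ 1]

theorem mu_four (p : Equiv.Perm (Fin 4)) : kingMu 4 p = -1 := by
  rw [kingMu_eq_of (by omega) p {⟨1, 1⟩}]
  · simp [mu_one]
  · intro x hx
    rw [Finset.mem_singleton.1 hx, mem_below]
    exact ⟨le_refl _, by omega, king_one _, one_contained (by omega) _ _⟩
  · intro l τ h1 h2 h3 h4 h5
    exfalso
    by_cases hl : l = 1
    · exact h5 (by simp [len_one τ hl])
    · rcases small_kings τ h3 (by omega) (by omega) with h | h <;>
      · have := congrArg Sigma.fst h
        simp at this; omega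

/-- Kings of length at least 5 with exactly one of the two length 4 kings below them. -/
theorem mu_avoid (p r : Equiv.Perm (Fin 4)) (hp : IsKing p)
    (hpr : ∀ {l : ℕ} (τ : Equiv.Perm (Fin l)), IsKing τ → 2 ≤ l → Contains p τ ∨ Contains r τ) :
    ∀ (n : ℕ) (σ : Equiv.Perm (Fin n)), 5 ≤ n → IsKing σ → ¬ Contains r σ → kingMu n σ = 0 := by
  intro n
  induction n using Nat.strong_induction_on with
  | _ n ih =>
  intro σ hn hσ hr
  rw [kingMu_eq_of (by omega) σ {⟨1, 1⟩, ⟨4, p⟩}]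
  · rw [Finset.sum_pair (by intro h; have := congrArg Sigma.fst h; simp at this)]
    simp [mu_one, mu_four]
  · intro x hx
    rcases Finset.mem_insert.1 hx with rfl | hx
    · rw [mem_below]
      exact ⟨le_refl _, by omega, king_one _, one_contained (by omega) _ _⟩
    · rw [Finset.mem_singleton.1 hx, mem_below]
      exact ⟨by omega, by omega, hp, (hpr σ hσ (by omega)).resolve_right hr⟩
  · intro l τ h1 h2 h3 h4 h5
    have hr' : ¬ Contains r τ := fun h => hr (h.trans' h4)
    by_cases hl : l = 1
    · exact absurd (by simp [len_one τ hl]) h5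
    have hc := (hpr τ h3 (by omega)).resolve_right hr'
    by_cases hl5 : 5 ≤ l
    · exact ih l h2 τ hl5 h3 hr'
    · obtain rfl : l = 4 := le_antisymm (by omega) hc.le'
      rw [hc.eq'] at h5
      simp at h5

theorem H_contains (π : Equiv.Perm (Fin 5)) (hπ : π ∈ Hset) :
    Contains p3142 π ∧ Contains p2413 π := by
  rcases hπ with rfl | rfl | rfl | rfl
  · exact ⟨contains_of_four _ _ ![1,2,3,4] (by decide) (by decide) (by decide) (by decide),
      contains_of_four _ _ ![0,1,2,4] (by decide) (by decide) (by decide) (by decide)⟩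
  · exact ⟨contains_of_four _ _ ![0,2,3,4] (by decide) (by decide) (by decide) (by decide),
      contains_of_four _ _ ![0,1,2,3] (by decide) (by decide) (by decide) (by decide)⟩
  · exact ⟨contains_of_four _ _ ![0,1,2,4] (by decide) (by decide) (by decide) (by decide),
      contains_of_four _ _ ![1,2,3,4] (by decide) (by decide) (by decide) (by decide)⟩
  · exact ⟨contains_of_four _ _ ![0,1,2,3] (by decide) (by decide) (by decide) (by decide),
      contains_of_four _ _ ![0,2,3,4] (by decide) (by decide) (by decide) (by decide)⟩

theorem mem_three {n : ℕ} (hn : 5 ≤ n) (σ : Equiv.Perm (Fin n)) (h1 : Contains p3142 σ)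
    (h2 : Contains p2413 σ) : (⟨1, 1⟩ : Σ l : ℕ, Equiv.Perm (Fin l)) ∈ below σ ∧
      (⟨4, p3142⟩ : Σ l : ℕ, Equiv.Perm (Fin l)) ∈ below σ ∧
      (⟨4, p2413⟩ : Σ l : ℕ, Equiv.Perm (Fin l)) ∈ below σ := by
  simp only [mem_below]
  exact ⟨⟨le_refl _, by omega, king_one _, one_contained (by omega) _ _⟩,
    ⟨by omega, by omega, king_3142, h1⟩, ⟨by omega, by omega, king_2413, h2⟩⟩

theorem mu_H (π : Equiv.Perm (Fin 5)) (hπ : π ∈ Hset) : kingMu 5 π = 1 := by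
  obtain ⟨c1, c2⟩ := H_contains π hπ
  obtain ⟨m1, m2, m3⟩ := mem_three (le_refl 5) π c1 c2
  rw [kingMu_eq_of (by omega) π {⟨1, 1⟩, ⟨4, p3142⟩, ⟨4, p2413⟩}]
  · rw [Finset.sum_insert, Finset.sum_pair]
    · simp [mu_one, mu_four]
    · simpa using ne_2413.symm
    · simp
  · intro x hx
    simp only [Finset.mem_insert, Finset.mem_singleton] at hx
    rcases hx with rfl | rfl | rfl <;> assumption
  · intro l τ h1 h2 h3 h4 h5
    exfalso; apply h5
    by_cases hl : l = 1
    · simp [len_one τ hl]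
    · rcases small_kings τ h3 (by omega) (by omega) with h | h <;> simp [h]

/-- if `σ ∈ K_n`, `n > 5`, there is exactly one king `π ≺ σ` with
`π ∈ ℍ`, and every king `π' ≺ σ` not containing `π` avoids [3142] or avoids [2413],
then `μ(σ) = 0`. -/
theorem mu_eq_zero_of_unique_H (n : ℕ) (hn : 5 < n) (σ : Equiv.Perm (Fin n)) (hσ : IsKing σ)
    (π : Equiv.Perm (Fin 5)) (hπking : IsKing π) (hπH : π ∈ Hset)
    (hπσ : StrictContains π σ)
    (huniq : ∀ π₂ : Equiv.Perm (Fin 5),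
      IsKing π₂ → π₂ ∈ Hset → StrictContains π₂ σ → π₂ = π)
    (havoid : ∀ (l : ℕ) (π' : Equiv.Perm (Fin l)), IsKing π' → StrictContains π' σ →
      ¬ Contains π π' → (¬ Contains p3142 π' ∨ ¬ Contains p2413 π')) :
    kingMu n σ = 0 := by
  induction n using Nat.strong_induction_on with
  | _ n ih =>
  obtain ⟨c1, c2⟩ := H_contains π hπH
  obtain ⟨m1, m2, m3⟩ := mem_three (by omega) σ (c1.trans' hπσ.1) (c2.trans' hπσ.1)
  rw [kingMu_eq_of (by omega) σ {⟨5, π⟩, ⟨1, 1⟩, ⟨4, p3142⟩, ⟨4, p2413⟩}]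
  · rw [Finset.sum_insert, Finset.sum_insert, Finset.sum_pair]
    · simp [mu_one, mu_four, mu_H π hπH]
    · simpa using ne_2413.symm
    · simp
    · simp
  · intro x hx
    simp only [Finset.mem_insert, Finset.mem_singleton] at hx
    rcases hx with rfl | rfl | rfl | rfl
    · rw [mem_below]; exact ⟨by omega, hn, hπking, hπσ.1⟩
    all_goals assumption
  · intro l τ h1 h2 h3 h4 h5
    by_cases hl : l = 1
    · exact absurd (by simp [len_one τ hl]) h5
    by_cases hl4 : l ≤ 4
    · exfalso; apply h5
      rcases small_kings τ h3 (by omega) (by omega) with h | h <;> simp [h]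
    by_cases hc : Contains π τ
    · by_cases hl5 : l = 5
      · subst hl5
        rw [hc.eq'] at h5
        simp at h5
      · refine ih l h2 (by omega) τ h3 ⟨hc, by omega⟩ ?_ ?_
        · intro π₂ k1 k2 k3
          exact huniq π₂ k1 k2 ⟨k3.1.trans' h4, hn⟩
        · intro l' π' k1 k2 k3
          exact havoid l' π' k1 ⟨k2.1.trans' h4, k2.2.trans h2⟩ k3
    · rcases havoid l τ h3 ⟨h4, h2⟩ hc with h | h
      · exact mu_avoid p2413 p3142 king_2413
          (fun τ hτ hl => (king_contains hl τ hτ).symm) l τ (by omega) h3 h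
      · exact mu_avoid p3142 p2413 king_3142
          (fun τ hτ hl => king_contains hl τ hτ) l τ (by omega) h3 h
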